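/- Let 0 ≤ p < 1. The map H̃(A, B) = (1-p) ∫₀¹ (λA + (1-λ)B)^{-p} dλ is jointly convex on pairs of n×n positive definite complex matrices (in the Loewner order), and for positive real scalars s ≠ t (i.e., 1×1 matrices) it satisfies H̃(s, t) = (t^{1-p} − s^{1-p})/(t − s), while H̃(t, t) = (1-p)t^{-p}. Thus the function H(s,t) = (t^{1-p}−s^{1-p})/(t−s) for s ≠ t, H(t,t) = (1-p)t^{-p}, extends to a jointly convex map on pairs of positive definite matrices. -/

import Mathlib

open Matrix MeasureTheory
open scoped ComplexOrder

attribute [local instance] Matrix.normedAddCommGroup Matrix.normedSpace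

/-- Matrix power by a real exponent via the functional calculus
(unitary diagonalization for Hermitian matrices; junk value otherwise). -/
noncomputable def mpow {n : ℕ} (A : Matrix (Fin n) (Fin n) ℂ) (q : ℝ) :
    Matrix (Fin n) (Fin n) ℂ :=
  if hA : A.IsHermitian then
    (hA.eigenvectorUnitary : Matrix (Fin n) (Fin n) ℂ) *
      Matrix.diagonal (fun i => ((hA.eigenvalues i ^ q : ℝ) : ℂ)) *
      (star (hA.eigenvectorUnitary : Matrix (Fin n) (Fin n) ℂ))
  else 0

/-- `H̃(A,B) = (1-p) ∫₀¹ (λA + (1-λ)B)^{-p} dλ`. -/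
noncomputable def Hmap {n : ℕ} (p : ℝ) (A B : Matrix (Fin n) (Fin n) ℂ) :
    Matrix (Fin n) (Fin n) ℂ :=
  (1 - p) • ∫ l in Set.Icc (0 : ℝ) 1, mpow (l • A + (1 - l) • B) (-p)

/-- Operator convexity of `a ↦ a ^ (-p)` in a C⋆-algebra, for `p ∈ [0,1]`. -/
lemma cstar_rpow_neg_convex {A : Type*} [CStarAlgebra A] [PartialOrder A] [StarOrderedRing A]
    {p : ℝ} (hp0 : 0 ≤ p) (hp1 : p ≤ 1) {a b : A}
    (ha : IsStrictlyPositive a) (hb : IsStrictlyPositive b)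
    {s t : ℝ} (hs : 0 ≤ s) (ht : 0 ≤ t) (hst : s + t = 1) :
    (s • a + t • b) ^ (-p) ≤ s • a ^ (-p) + t • b ^ (-p) := by
  have hconv := (CStarAlgebra.convexOn_ringInverse (A := A))
  have hab : IsStrictlyPositive (s • a + t • b) := hconv.1 ha hb hs ht hst
  rcases hp0.eq_or_lt with rfl | hp
  · rw [neg_zero, CFC.rpow_zero _ hab.nonneg, CFC.rpow_zero _ ha.nonneg,
      CFC.rpow_zero _ hb.nonneg, ← add_smul, hst, one_smul]
  · have key : ∀ x : A, IsStrictlyPositive x → x ^ (-p) = Ring.inverse (x ^ p) := by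
      intro x hx
      rw [CFC.inverse_eq_rpow_neg_one (IsStrictlyPositive.rpow x p hx),
        CFC.rpow_rpow x p (-1) hp.ne' hx]
      congr 1
      ring
    have ha' := IsStrictlyPositive.rpow a p ha
    have hb' := IsStrictlyPositive.rpow b p hb
    have h1 : s • a ^ p + t • b ^ p ≤ (s • a + t • b) ^ p :=
      (CFC.concaveOn_rpow (A := A) ⟨hp0, hp1⟩).2 ha.nonneg hb.nonneg hs ht hst
    have h2 : IsStrictlyPositive (s • a ^ p + t • b ^ p) := hconv.1 ha' hb' hs ht hst
    rw [key _ hab, key _ ha, key _ hb]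
    exact (CStarAlgebra.ringInverse_le_ringInverse h1 h2).trans (hconv.2 ha' hb' hs ht hst)

/-- Continuity of real powers along a path of strictly positive elements. -/
lemma cstar_cfc_rpow_continuousOn {A : Type*} [CStarAlgebra A] [PartialOrder A] [StarOrderedRing A]
    (q : ℝ) {X : Type*} [TopologicalSpace X] {f : X → A} {s : Set X} (hf : ContinuousOn f s)
    (hpos : ∀ x ∈ s, IsStrictlyPositive (f x)) :
    ContinuousOn (fun x => cfc (fun r : ℝ => r ^ q) (f x)) s := by
  refine ContinuousOn.cfc_of_mem_nhdsSet (s := Set.Ioi (0 : ℝ)) _ ?_ hf ?_ ?_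
  · refine isOpen_Ioi.mem_nhdsSet.2 ?_
    intro r hr
    simp only [Set.mem_iUnion] at hr
    obtain ⟨x, hx, hr⟩ := hr
    exact (hpos x hx).spectrum_pos hr
  · intro x hx
    exact (hpos x hx).isSelfAdjoint
  · intro r hr
    exact (Real.continuousAt_rpow_const _ _ (Or.inl (ne_of_gt hr))).continuousWithinAt

lemma mpow_eq_cfc {n : ℕ} {A : Matrix (Fin n) (Fin n) ℂ} (hA : A.IsHermitian) (q : ℝ) :
    mpow A q = cfc (fun r : ℝ => r ^ q) A := by
  rw [hA.cfc_eq, mpow, dif_pos hA, Matrix.IsHermitian.cfc, Unitary.conjStarAlgAut_apply]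
  rfl

lemma posDef_comb {n : ℕ} {A B : Matrix (Fin n) (Fin n) ℂ} (hA : A.PosDef) (hB : B.PosDef)
    {s t : ℝ} (hs : 0 ≤ s) (ht : 0 ≤ t) (hst : s + t = 1) : (s • A + t • B).PosDef := by
  rcases hs.eq_or_lt with rfl | hs
  · have : t = 1 := by linarith
    subst this
    simpa using hB
  · exact (hA.smul hs).add_posSemidef (hB.posSemidef.smul ht)

open scoped MatrixOrder in
lemma mpow_convex {n : ℕ} {p : ℝ} (hp0 : 0 ≤ p) (hp1 : p ≤ 1)
    {A B : Matrix (Fin n) (Fin n) ℂ} (hA : A.PosDef) (hB : B.PosDef)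
    {s t : ℝ} (hs : 0 ≤ s) (ht : 0 ≤ t) (hst : s + t = 1) :
    ((s • mpow A (-p) + t • mpow B (-p)) - mpow (s • A + t • B) (-p)).PosSemidef := by
  have hAB := posDef_comb hA hB hs ht hst
  have h := @cstar_rpow_neg_convex (Matrix (Fin n) (Fin n) ℂ) Matrix.instCStarAlgebra _ _
    p hp0 hp1 A B (Matrix.isStrictlyPositive_iff_posDef.2 hA)
    (Matrix.isStrictlyPositive_iff_posDef.2 hB) s t hs ht hst
  rw [mpow_eq_cfc hA.1, mpow_eq_cfc hB.1, mpow_eq_cfc hAB.1,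
    ← CFC.rpow_eq_cfc_real hA.posSemidef.nonneg, ← CFC.rpow_eq_cfc_real hB.posSemidef.nonneg,
    ← CFC.rpow_eq_cfc_real hAB.posSemidef.nonneg]
  exact Matrix.le_iff.1 h

open scoped MatrixOrder in
lemma mpow_path_continuousOn {n : ℕ} (q : ℝ) {A B : Matrix (Fin n) (Fin n) ℂ}
    (hA : A.PosDef) (hB : B.PosDef) :
    ContinuousOn (fun l : ℝ => mpow (l • A + (1 - l) • B) q) (Set.Icc 0 1) := by
  have hpd : ∀ l ∈ Set.Icc (0 : ℝ) 1, (l • A + (1 - l) • B).PosDef := fun l hl =>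
    posDef_comb hA hB hl.1 (by linarith [hl.2]) (by ring)
  have hc : Continuous (fun l : ℝ => l • A + (1 - l) • B) := by fun_prop
  have h := @cstar_cfc_rpow_continuousOn (Matrix (Fin n) (Fin n) ℂ) Matrix.instCStarAlgebra _ _
    q ℝ _ (fun l : ℝ => l • A + (1 - l) • B) (Set.Icc 0 1) hc.continuousOn
    (fun l hl => Matrix.isStrictlyPositive_iff_posDef.2 (hpd l hl))
  refine ContinuousOn.congr h ?_
  intro l hl
  exact mpow_eq_cfc (hpd l hl).1 q

lemma integral_comb {E : Type*} [NormedAddCommGroup E] [NormedSpace ℝ E]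
    {f g h : ℝ → E} (hf : ContinuousOn f (Set.Icc 0 1)) (hg : ContinuousOn g (Set.Icc 0 1))
    (hh : ContinuousOn h (Set.Icc 0 1)) (a b : ℝ) :
    ∫ l in Set.Icc (0 : ℝ) 1, ((a • f l + b • g l) - h l) =
      (a • (∫ l in Set.Icc (0 : ℝ) 1, f l) + b • ∫ l in Set.Icc (0 : ℝ) 1, g l) -
        ∫ l in Set.Icc (0 : ℝ) 1, h l := by
  have i1 : IntegrableOn (fun l => a • f l) (Set.Icc 0 1) :=
    (hf.const_smul a).integrableOn_compact isCompact_Icc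
  have i2 : IntegrableOn (fun l => b • g l) (Set.Icc 0 1) :=
    (hg.const_smul b).integrableOn_compact isCompact_Icc
  have i3 : IntegrableOn h (Set.Icc 0 1) := hh.integrableOn_compact isCompact_Icc
  have i4 : IntegrableOn (fun l => a • f l + b • g l) (Set.Icc 0 1) := i1.add i2
  rw [integral_sub i4 i3, integral_add i1 i2, integral_smul, integral_smul]

lemma integral_mem_of_continuousOn {E : Type*} [NormedAddCommGroup E] [NormedSpace ℝ E]
    [CompleteSpace E] {S : Set E} (hS : Convex ℝ S) (hc : IsClosed S)
    {f : ℝ → E} (hf : ContinuousOn f (Set.Icc 0 1)) (hpos : ∀ l ∈ Set.Icc (0 : ℝ) 1, f l ∈ S) :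
    ∫ l in Set.Icc (0 : ℝ) 1, f l ∈ S := by
  have : IsProbabilityMeasure (volume.restrict (Set.Icc (0 : ℝ) 1)) := ⟨by simp⟩
  refine hS.integral_mem hc ?_ (hf.integrableOn_compact isCompact_Icc)
  filter_upwards [ae_restrict_mem measurableSet_Icc] with l hl
  exact hpos l hl

lemma isClosed_posSemidef (n : ℕ) :
    IsClosed {M : Matrix (Fin n) (Fin n) ℂ | M.PosSemidef} := by
  have : {M : Matrix (Fin n) (Fin n) ℂ | M.PosSemidef} =
      {M | Mᴴ = M} ∩ ⋂ x : Fin n → ℂ, {M | 0 ≤ star x ⬝ᵥ M *ᵥ x} := by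
    ext M
    simp only [Set.mem_ofPred_eq, Set.mem_inter_iff, Set.mem_iInter]
    constructor
    · intro h
      exact ⟨h.1, fun x => h.dotProduct_mulVec_nonneg x⟩
    · rintro ⟨h1, h2⟩
      exact .of_dotProduct_mulVec_nonneg h1 h2
  rw [this]
  refine (isClosed_eq (by fun_prop) (by fun_prop)).inter (isClosed_iInter fun x => ?_)
  exact isClosed_le (by fun_prop) (by fun_prop)

lemma posSemidef_integral {n : ℕ} {f : ℝ → Matrix (Fin n) (Fin n) ℂ}
    (hf : ContinuousOn f (Set.Icc 0 1)) (hpos : ∀ l ∈ Set.Icc (0 : ℝ) 1, (f l).PosSemidef) :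
    (∫ l in Set.Icc (0 : ℝ) 1, f l).PosSemidef := by
  have hconv : Convex ℝ {M : Matrix (Fin n) (Fin n) ℂ | M.PosSemidef} := by
    intro A hA B hB s t hs ht _
    exact (Matrix.PosSemidef.smul hA hs).add (Matrix.PosSemidef.smul hB ht)
  exact integral_mem_of_continuousOn hconv (isClosed_posSemidef n) hf hpos

lemma mpow_scalar {n : ℕ} (s q : ℝ) :
    mpow (s • (1 : Matrix (Fin n) (Fin n) ℂ)) q = (s ^ q) • 1 := by
  have h : (s • (1 : Matrix (Fin n) (Fin n) ℂ)).IsHermitian := by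
    simp [Matrix.IsHermitian, Matrix.conjTranspose_smul]
  rw [mpow_eq_cfc h, ← Algebra.algebraMap_eq_smul_one, cfc_algebraMap,
    Algebra.algebraMap_eq_smul_one]

lemma Hmap_scalar {n : ℕ} (p s t : ℝ) :
    Hmap p (s • (1 : Matrix (Fin n) (Fin n) ℂ)) (t • 1) =
      ((1 - p) * ∫ l in (0 : ℝ)..1, (l * s + (1 - l) * t) ^ (-p)) • 1 := by
  have : ∀ l : ℝ, mpow (l • s • (1 : Matrix (Fin n) (Fin n) ℂ) + (1 - l) • t • 1) (-p) =
      ((l * s + (1 - l) * t) ^ (-p)) • 1 := by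
    intro l
    rw [smul_smul, smul_smul, ← add_smul, mpow_scalar]
  rw [Hmap, mul_smul]
  simp_rw [this]
  rw [integral_smul_const, integral_Icc_eq_integral_Ioc,
    intervalIntegral.integral_of_le zero_le_one]

theorem stmt7 (p : ℝ) (hp0 : 0 ≤ p) (hp1 : p < 1) :
    (∀ (n : ℕ) (A₁ A₂ B₁ B₂ : Matrix (Fin n) (Fin n) ℂ),
      A₁.PosDef → A₂.PosDef → B₁.PosDef → B₂.PosDef →
      ∀ α : ℝ, 0 ≤ α → α ≤ 1 →
      ((α • Hmap p A₁ B₁ + (1 - α) • Hmap p A₂ B₂) -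
        Hmap p (α • A₁ + (1 - α) • A₂) (α • B₁ + (1 - α) • B₂)).PosSemidef) ∧
    (∀ s t : ℝ, 0 < s → 0 < t → s ≠ t →
      Hmap p (s • (1 : Matrix (Fin 1) (Fin 1) ℂ)) (t • 1) =
        ((t ^ (1 - p) - s ^ (1 - p)) / (t - s)) • 1) ∧
    (∀ t : ℝ, 0 < t →
      Hmap p (t • (1 : Matrix (Fin 1) (Fin 1) ℂ)) (t • 1) =
        ((1 - p) * t ^ (-p)) • 1) := by
  refine ⟨?_, ?_, ?_⟩
  · intro n A₁ A₂ B₁ B₂ hA₁ hA₂ hB₁ hB₂ α h0 h1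
    have h1' : 0 ≤ 1 - α := by linarith
    have hs : α + (1 - α) = 1 := by ring
    have hA := posDef_comb hA₁ hA₂ h0 h1' hs
    have hB := posDef_comb hB₁ hB₂ h0 h1' hs
    have i1 := mpow_path_continuousOn (-p) hA₁ hB₁
    have i2 := mpow_path_continuousOn (-p) hA₂ hB₂
    have i3 := mpow_path_continuousOn (-p) hA hB
    have e : (α • Hmap p A₁ B₁ + (1 - α) • Hmap p A₂ B₂) -
        Hmap p (α • A₁ + (1 - α) • A₂) (α • B₁ + (1 - α) • B₂) =
        (1 - p) • ∫ l in Set.Icc (0 : ℝ) 1,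
          ((α • mpow (l • A₁ + (1 - l) • B₁) (-p) +
            (1 - α) • mpow (l • A₂ + (1 - l) • B₂) (-p)) -
          mpow (l • (α • A₁ + (1 - α) • A₂) + (1 - l) • (α • B₁ + (1 - α) • B₂)) (-p)) := by
      rw [integral_comb i1 i2 i3]
      simp only [Hmap]
      module
    rw [e]
    refine Matrix.PosSemidef.smul (posSemidef_integral
      (((i1.const_smul α).add (i2.const_smul (1 - α))).sub i3) ?_) (by linarith)
    intro l hl
    have hl1 : 0 ≤ 1 - l := by linarith [hl.2]
    have h := mpow_convex hp0 hp1.le (posDef_comb hA₁ hB₁ hl.1 hl1 (by ring))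
      (posDef_comb hA₂ hB₂ hl.1 hl1 (by ring)) h0 h1' hs
    have e2 : l • (α • A₁ + (1 - α) • A₂) + (1 - l) • (α • B₁ + (1 - α) • B₂) =
        α • (l • A₁ + (1 - l) • B₁) + (1 - α) • (l • A₂ + (1 - l) • B₂) := by module
    rw [← e2] at h
    exact h
  · intro s t hs ht hst
    rw [Hmap_scalar]
    congr 1
    have e : ∀ l : ℝ, (l * s + (1 - l) * t) ^ (-p) = ((s - t) * l + t) ^ (-p) := by
      intro l
      congr 1
      ring
    have hst' : s - t ≠ 0 := sub_ne_zero.2 hst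
    have hts' : t - s ≠ 0 := sub_ne_zero.2 hst.symm
    have hp' : 1 - p ≠ 0 := by linarith
    simp_rw [e]
    rw [intervalIntegral.integral_comp_mul_add (fun x : ℝ => x ^ (-p)) hst' t,
      integral_rpow (Or.inl (by linarith)), show (s - t) * 0 + t = t by ring,
      show (s - t) * 1 + t = s by ring, show -p + 1 = 1 - p by ring, smul_eq_mul]
    field_simp
    ring
  · intro t ht
    rw [Hmap_scalar]
    congr 2
    have e : ∀ l : ℝ, (l * t + (1 - l) * t) ^ (-p) = t ^ (-p) := by
      intro l
      congr 1
      ring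
    simp_rw [e]
    simp
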